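/- There exists a co-c.e. tree T ⊆ 2^{<ω} whose characteristic sequence (under a fixed computable bijection between 2^{<ω} and ℕ) is weakly deep, but the Π⁰₁ class [T] is not tt-deep. -/

import Mathlib

open scoped ENNReal NNReal
open MeasureTheory Filter

namespace Depth

/-- The length-`n` initial segment of `X ∈ 2^ω`, as a finite binary string. -/
def seqTake (X : ℕ → Bool) (n : ℕ) : List Bool := (List.range n).map X

/-- `τ` is an initial segment of the sequence `X`. -/
def PrefixOfSeq (τ : List Bool) (X : ℕ → Bool) : Prop := τ = seqTake X τ.length

/-- A real-valued function is computable if its values are uniformly computable reals: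
there is a computable rational approximation function, accurate to within `2^{-k}`. -/
def ComputableNNRealFun {α : Type} [Primcodable α] (f : α → ℝ≥0) : Prop :=
  ∃ q : α × ℕ → ℚ, Computable q ∧
    ∀ x k, |(q (x, k) : ℝ) - (f x : ℝ)| ≤ (2 : ℝ) ^ (-(k : ℤ))

/-- A real-valued function is lower semicomputable if it is the pointwise supremum of a
computable sequence of rationals, nondecreasing in the stage. -/
def LowerSemicomputableFun {α : Type} [Primcodable α] (f : α → ℝ≥0) : Prop :=
  ∃ a : α × ℕ → ℚ, Computable a ∧ (∀ x s, 0 ≤ a (x, s)) ∧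
    (∀ x, Monotone fun s => a (x, s)) ∧ ∀ x, (f x : ℝ) = ⨆ s, (a (x, s) : ℝ)

/-- A discrete semimeasure on binary strings. -/
structure DiscSemimeasure where
  f : List Bool → ℝ≥0
  sum_le_one : (∑' σ : List Bool, (f σ : ℝ≥0∞)) ≤ 1

def DiscSemimeasure.Computable' (m : DiscSemimeasure) : Prop := ComputableNNRealFun m.f

def DiscSemimeasure.LowerSemicomputable' (m : DiscSemimeasure) : Prop :=
  LowerSemicomputableFun m.f

/-- `U` is a universal lower semicomputable discrete semimeasure (denoted 𝐦). -/
def UniversalDisc (U : DiscSemimeasure) : Prop :=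
  U.LowerSemicomputable' ∧
    ∀ m : DiscSemimeasure, m.LowerSemicomputable' →
      ∃ c : ℝ≥0, 0 < c ∧ ∀ σ, m.f σ ≤ c * U.f σ

/-- A continuous semimeasure on binary strings. -/
structure ContSemimeasure where
  f : List Bool → ℝ≥0
  le_one : f [] ≤ 1
  superadditive : ∀ σ : List Bool, f (σ ++ [false]) + f (σ ++ [true]) ≤ f σ

def ContSemimeasure.Computable' (P : ContSemimeasure) : Prop := ComputableNNRealFun P.f

def ContSemimeasure.LowerSemicomputable' (P : ContSemimeasure) : Prop :=
  LowerSemicomputableFun P.f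

/-- `M` is a universal lower semicomputable continuous semimeasure (denoted 𝐌). -/
def UniversalCont (M : ContSemimeasure) : Prop :=
  M.LowerSemicomputable' ∧
    ∀ P : ContSemimeasure, P.LowerSemicomputable' →
      ∃ c : ℝ≥0, 0 < c ∧ ∀ σ, P.f σ ≤ c * M.f σ

/-- A computable order: a computable, nondecreasing, unbounded function ℕ → ℕ. -/
def ComputableOrder (g : ℕ → ℕ) : Prop :=
  Computable g ∧ Monotone g ∧ ∀ k, ∃ n, k ≤ g n

/-- `X` is strongly deep (relative to the universal discrete semimeasure `U`):
for every computable discrete semimeasure `p` and every `c > 0`,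
`𝐦(X↾n) ≥ c·p(X↾n)` for all sufficiently large `n`. -/
def StronglyDeep (U : DiscSemimeasure) (X : ℕ → Bool) : Prop :=
  ∀ p : DiscSemimeasure, p.Computable' → ∀ c : ℝ≥0, 0 < c →
    ∀ᶠ n in atTop, c * p.f (seqTake X n) ≤ U.f (seqTake X n)

/-- `X` is order-deep (relative to the universal discrete semimeasure `U`). -/
def OrderDeep (U : DiscSemimeasure) (X : ℕ → Bool) : Prop :=
  ∃ g : ℕ → ℕ, ComputableOrder g ∧
    ∀ p : DiscSemimeasure, p.Computable' →
      ∃ c : ℝ≥0, 0 < c ∧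
        ∀ n, (2 : ℝ≥0) ^ g n * p.f (seqTake X n) ≤ c * U.f (seqTake X n)

/-- A computably enumerable set. -/
def CEset {α : Type} [Primcodable α] (S : Set α) : Prop :=
  ∃ f : α × ℕ → Bool, Computable f ∧ ∀ x, x ∈ S ↔ ∃ s, f (x, s) = true

/-- A Turing functional, given by a c.e. set of consistent pairs of binary strings. -/
structure TuringFunctional where
  S : Set (List Bool × List Bool)
  ce : CEset S
  consistent : ∀ ⦃σ τ σ' τ'⦄, (σ, τ) ∈ S → (σ', τ') ∈ S → σ <+: σ' → (τ <+: τ' ∨ τ' <+: τ)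

/-- `Φ^Y = X`, where the output is the infinite sequence `X`:
every output of `Φ` on a prefix of `Y` is a prefix of `X`, and the outputs on prefixes
of `Y` have unbounded lengths. -/
def Computes (Φ : TuringFunctional) (Y X : ℕ → Bool) : Prop :=
  (∀ m τ, (seqTake Y m, τ) ∈ Φ.S → PrefixOfSeq τ X) ∧
  (∀ n, ∃ m τ, (seqTake Y m, τ) ∈ Φ.S ∧ n ≤ τ.length)

/-- A tt-functional: the output `Φ^X` is infinite for every oracle `X`. -/
def TuringFunctional.Total (Φ : TuringFunctional) : Prop :=
  ∀ X : ℕ → Bool, ∀ n, ∃ m τ, (seqTake X m, τ) ∈ Φ.S ∧ n ≤ τ.length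

/-- Truth-table reducibility `X ≤_tt Y`. -/
def TTLe (X Y : ℕ → Bool) : Prop :=
  ∃ Φ : TuringFunctional, Φ.Total ∧ Computes Φ Y X

/-- Turing reducibility `X ≤_T Y`. -/
def TuringLe (X Y : ℕ → Bool) : Prop :=
  ∃ Φ : TuringFunctional, Computes Φ Y X

/-- A tree: a prefix-closed set of binary strings. -/
def IsTree (T : Set (List Bool)) : Prop := ∀ ⦃σ τ : List Bool⦄, σ ∈ T → τ <+: σ → τ ∈ T

/-- A co-c.e. set of strings. -/
def CoCE (T : Set (List Bool)) : Prop := CEset Tᶜ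

/-- `[T]`: the set of infinite paths through `T`. -/
def paths (T : Set (List Bool)) : Set (ℕ → Bool) := {X | ∀ n, seqTake X n ∈ T}

/-- A Π⁰₁ class: the set of paths through a co-c.e. tree. -/
def IsPi01 (P : Set (ℕ → Bool)) : Prop :=
  ∃ T : Set (List Bool), IsTree T ∧ CoCE T ∧ P = paths T

/-- The canonical tree of a class: the set of all initial segments of its members. -/
def canonTree (P : Set (ℕ → Bool)) : Set (List Bool) :=
  {σ | ∃ X ∈ P, σ = seqTake X σ.length}

/-- `Q(T_n)`: the sum of `Q` over the strings of length `n` in `T`. -/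
noncomputable def levelSum (Q : List Bool → ℝ≥0) (T : Set (List Bool)) (n : ℕ) : ℝ≥0∞ :=
  ∑' σ : {σ : List Bool // σ ∈ T ∧ σ.length = n}, (Q σ.1 : ℝ≥0∞)

/-- The depth condition on a class `P` (relative to the universal continuous semimeasure `M`):
there is a computable order `g` with `𝐌(T_n) ≤ 2^{-g(n)}` for all `n`, where `T` is the
canonical tree of `P`. -/
def DeepClass (M : ContSemimeasure) (P : Set (ℕ → Bool)) : Prop :=
  ∃ g : ℕ → ℕ, ComputableOrder g ∧
    ∀ n, levelSum M.f (canonTree P) n ≤ (2 : ℝ≥0∞) ^ (-(g n : ℤ))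

/-- `X` is a member of some deep Π⁰₁ class. -/
def MemberOfDeepClass (M : ContSemimeasure) (X : ℕ → Bool) : Prop :=
  ∃ P : Set (ℕ → Bool), IsPi01 P ∧ DeepClass M P ∧ X ∈ P

/-- The basic cylinder `[σ]`. -/
def cyl (σ : List Bool) : Set (ℕ → Bool) := {X | PrefixOfSeq σ X}

/-- A computable (Borel) probability measure on Cantor space:
its cylinder values are uniformly computable reals. -/
def ComputableMeasure (μ : Measure (ℕ → Bool)) : Prop :=
  IsProbabilityMeasure μ ∧
    ∃ q : List Bool × ℕ → ℚ, Computable q ∧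
      ∀ σ k, |(q (σ, k) : ℝ) - (μ (cyl σ)).toReal| ≤ (2 : ℝ) ^ (-(k : ℤ))

/-- A uniformly c.e. sequence of sets of strings. -/
def UniformlyCE (W : ℕ → Set (List Bool)) : Prop :=
  CEset {p : ℕ × List Bool | p.2 ∈ W p.1}

/-- `X` is μ-Martin-Löf random: `X` passes every μ-Martin-Löf test. -/
def MLRandom (μ : Measure (ℕ → Bool)) (X : ℕ → Bool) : Prop :=
  ∀ W : ℕ → Set (List Bool), UniformlyCE W →
    (∀ i, μ (⋃ σ ∈ W i, cyl σ) ≤ (2 : ℝ≥0∞) ^ (-(i : ℤ))) →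
    X ∉ ⋂ i, ⋃ σ ∈ W i, cyl σ

/-- `X` is weakly deep: `X` is not Martin-Löf random with respect to any computable
probability measure. -/
def WeaklyDeep (X : ℕ → Bool) : Prop :=
  ∀ μ : Measure (ℕ → Bool), ComputableMeasure μ → ¬ MLRandom μ X

/-- The tt-depth condition on a class `P`: for every computable probability measure `μ`
there is a computable order `g` with `μ(T_n) ≤ 2^{-g(n)}`, `T` the canonical tree of `P`. -/
def TTDeepClass (P : Set (ℕ → Bool)) : Prop :=
  ∀ μ : Measure (ℕ → Bool), ComputableMeasure μ →
    ∃ g : ℕ → ℕ, ComputableOrder g ∧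
      ∀ n, (∑' σ : {σ : List Bool // σ ∈ canonTree P ∧ σ.length = n}, μ (cyl σ.1))
        ≤ (2 : ℝ≥0∞) ^ (-(g n : ℤ))

/-- `X` is complex: `𝐌(X↾n) ≤ 2^{-g(n)}` for some computable order `g`. -/
def Complex (M : ContSemimeasure) (X : ℕ → Bool) : Prop :=
  ∃ g : ℕ → ℕ, ComputableOrder g ∧ ∀ n, M.f (seqTake X n) ≤ (2 : ℝ≥0) ^ (-(g n : ℤ))

/-- A fixed computable bijection ℕ → 2^{<ω} (binary representation, dropping the
leading 1 of `n+1`). -/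
def natToStr (n : ℕ) : List Bool := (Nat.bits (n + 1)).dropLast

open Classical in
/-- The characteristic sequence of a set of strings, under the fixed computable bijection. -/
noncomputable def charSeqStr (T : Set (List Bool)) (n : ℕ) : Bool :=
  decide (natToStr n ∈ T)

open Classical in
/-- The characteristic sequence of a set of natural numbers. -/
noncomputable def charSeqNat (A : Set ℕ) (n : ℕ) : Bool :=
  decide (n ∈ A)

/-- `lam` is the uniform (fair-coin) Borel probability measure on Cantor space. -/
def IsFairCoin (lam : Measure (ℕ → Bool)) : Prop :=
  IsProbabilityMeasure lam ∧
    ∀ σ : List Bool, lam (cyl σ) = (2 : ℝ≥0∞) ^ (-(σ.length : ℤ))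

/-- The join `Y ⊕ Z`. -/
def join (Y Z : ℕ → Bool) (n : ℕ) : Bool :=
  if n % 2 = 0 then Y (n / 2) else Z (n / 2)

/-- The standard enumeration of the partial computable functions. -/
noncomputable def phi (e : ℕ) : ℕ →. ℕ := (Denumerable.ofNat Nat.Partrec.Code e).eval

/-- The halting set ∅'. -/
def haltingSet : Set ℕ := {e | (phi e e).Dom}

/-- `C` is an index set. -/
def IsIndexSet (C : Set ℕ) : Prop :=
  ∀ e e' : ℕ, phi e = phi e' → (e ∈ C ↔ e' ∈ C)


open Encodable

def e1 (x : ℚ) : ℕ := @encode ℚ Rat.instEncodable x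

theorem e1_eq (x : ℚ) : e1 x = Nat.pair (Equiv.intEquivNat x.num) x.den := by
  rcases x with ⟨a, b, c, d⟩
  rfl

theorem int_nonneg (a : ℕ) : Equiv.intEquivNat (a : ℤ) = 2 * a := rfl
theorem int_neg (a : ℕ) : Equiv.intEquivNat (Int.negSucc a) = 2 * a + 1 := rfl

def SS : Set ℕ := Set.range e1

theorem mem_SS (n : ℕ) : n ∈ SS ↔ 0 < n.unpair.2 ∧ Nat.Coprime ((n.unpair.1 + 1) / 2) n.unpair.2 := by
  have key : ∀ z : ℤ, z.natAbs = (Equiv.intEquivNat z + 1) / 2 := by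
    intro z
    rcases z with a | a
    · have := int_nonneg a
      simp only [Int.ofNat_eq_natCast, this]; simp; omega
    · rw [int_neg]; simp; omega
  constructor
  · rintro ⟨x, rfl⟩
    rw [e1_eq]; simp only [Nat.unpair_pair]
    rw [← key]
    exact ⟨x.den_pos, x.reduced⟩
  · rintro ⟨h1, h2⟩
    refine ⟨⟨Equiv.intEquivNat.symm n.unpair.1, n.unpair.2, h1.ne', ?_⟩, ?_⟩
    · rw [key]; simpa using h2
    · rw [e1_eq]; simp

theorem coprime_iff (x b : ℕ) (hb : 0 < b) : Nat.Coprime x b ↔ ∀ d < b + 1, ¬ (1 < d ∧ x % d = 0 ∧ b % d = 0) := by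
  constructor
  · rintro h d - ⟨h1, h2, h3⟩
    have := Nat.dvd_gcd (Nat.dvd_of_mod_eq_zero h2) (Nat.dvd_of_mod_eq_zero h3)
    rw [h] at this
    have := Nat.le_of_dvd one_pos this
    omega
  · intro h
    by_contra hc
    have hpos : 0 < Nat.gcd x b := Nat.gcd_pos_of_pos_right _ hb
    have hle := Nat.le_of_dvd hb (Nat.gcd_dvd_right x b)
    unfold Nat.Coprime at hc
    exact h (Nat.gcd x b) (by omega) ⟨by omega, Nat.mod_eq_zero_of_dvd (Nat.gcd_dvd_left x b),
      Nat.mod_eq_zero_of_dvd (Nat.gcd_dvd_right x b)⟩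

theorem SS_prim : PrimrecPred (fun n => n ∈ SS) := by
  have hR : PrimrecRel (fun (d : ℕ) (n : ℕ) => ¬ (1 < d ∧ ((n.unpair.1 + 1) / 2) % d = 0 ∧ n.unpair.2 % d = 0)) := by
    apply PrimrecPred.not
    have hu : Primrec (fun p : ℕ × ℕ => p.2.unpair) := Primrec.unpair.comp Primrec.snd
    refine PrimrecPred.and (Primrec.nat_lt.comp (Primrec.const 1) Primrec.fst) (PrimrecPred.and ?_ ?_)
    · exact Primrec.eq.comp (Primrec.nat_mod.comp (Primrec.nat_div.comp (Primrec.succ.comp (Primrec.fst.comp hu)) (Primrec.const 2)) Primrec.fst) (Primrec.const 0)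
    · exact Primrec.eq.comp (Primrec.nat_mod.comp (Primrec.snd.comp hu) Primrec.fst) (Primrec.const 0)
  have h2 := hR.forall_lt
  have hsnd : Primrec (fun n : ℕ => n.unpair.2) := Primrec.snd.comp Primrec.unpair
  have h3 : PrimrecPred (fun n : ℕ => 0 < n.unpair.2 ∧ ∀ d < n.unpair.2 + 1, ¬ (1 < d ∧ ((n.unpair.1 + 1) / 2) % d = 0 ∧ n.unpair.2 % d = 0)) :=
    PrimrecPred.and (Primrec.nat_lt.comp (Primrec.const 0) hsnd) (h2.comp (Primrec.succ.comp hsnd) Primrec.id)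
  refine h3.of_eq fun n => ?_
  rw [mem_SS]
  constructor
  · rintro ⟨a, b⟩; exact ⟨a, (coprime_iff _ _ a).2 b⟩
  · rintro ⟨a, b⟩; exact ⟨a, (coprime_iff _ _ a).1 b⟩

def e2 (x : ℚ) : ℕ := @encode ℚ Rat.instDenumerable.toEncodable x

instance SSinf : Infinite SS := Infinite.of_injective _ (Equiv.ofInjective e1 (@encode_injective ℚ Rat.instEncodable)).injective

noncomputable instance : DecidablePred (· ∈ SS) := @decidableRangeEncode ℚ Rat.instEncodable

noncomputable def dd (n : ℕ) : ℕ := (Nat.Subtype.ofNat SS n : ℕ)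

theorem dd_e2 (x : ℚ) : dd (e2 x) = e1 x := by
  have h := (Nat.Subtype.denumerable SS)
  have : Nat.Subtype.ofNat SS (e2 x) = (⟨e1 x, x, rfl⟩ : SS) := by
    have := @Denumerable.ofNat_encode SS (Nat.Subtype.denumerable SS) ⟨e1 x, x, rfl⟩
    exact this
  unfold dd
  rw [this]

theorem dd_succ (n : ℕ) (h : ∃ m, dd n + m + 1 ∈ SS)
    [DecidablePred fun m => dd n + m + 1 ∈ SS] : dd (n + 1) = dd n + Nat.find h + 1 := by
  have h1 : dd (n + 1) = ((Nat.Subtype.succ (Nat.Subtype.ofNat SS n) : SS) : ℕ) := rfl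
  rw [h1]
  unfold Nat.Subtype.succ
  dsimp [dd]
  have : ∀ a b c : ℕ, a = b → c + a + 1 = c + b + 1 := by intro a b c h; rw [h]
  apply this
  apply le_antisymm
  · apply Nat.find_min'
    exact Nat.find_spec h
  · generalize_proofs pf
    exact @Nat.find_min' _ (_) h _ (Nat.find_spec pf)

theorem dd_comp : Computable dd := by
  obtain ⟨inst, hS⟩ := SS_prim
  have hp : Computable₂ (fun (x m : ℕ) => decide (x + m + 1 ∈ SS)) :=
    hS.to_comp.comp (Primrec.succ.comp Primrec.nat_add).to_comp
  have hex' : ∀ x : ℕ, ∃ m, x + m + 1 ∈ SS := by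
    intro x
    have : SS.Infinite := Set.infinite_coe_iff.1 SSinf
    obtain ⟨b, hb, hx⟩ := this.exists_gt x
    exact ⟨b - x - 1, by convert hb using 1; omega⟩
  have hnext : Computable (fun x : ℕ => x + Nat.find (hex' x) + 1) := by
    have h1 : Partrec (fun x : ℕ => Nat.rfind (fun m => Part.some (decide (x + m + 1 ∈ SS)))) :=
      Partrec.rfind hp.partrec₂
    have h2 : Computable (fun x : ℕ => Nat.find (hex' x)) := by
      refine h1.of_eq_tot fun x => ?_
      refine Nat.mem_rfind.2 ⟨?_, ?_⟩
      · simpa using Nat.find_spec (hex' x)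
      · intro m hm
        simpa using Nat.find_min (hex' x) hm
    exact Computable.succ.comp (Primrec.nat_add.to_comp.comp Computable.id h2)
  refine (Computable.nat_rec (f := id) (g := fun _ => dd 0) (h := fun _ p => p.2 + Nat.find (hex' p.2) + 1) Computable.id (Computable.const _) ?_).of_eq ?_
  · exact hnext.comp (Computable.snd.comp Computable.snd)
  · intro n
    induction n with
    | zero => rfl
    | succ n ih =>
      simp only [id] at ih ⊢
      rw [ih]
      exact (dd_succ n (hex' (dd n))).symm

theorem e1_comp : Computable e1 :=
  (dd_comp.comp (Computable.encode (α := ℚ))).of_eq dd_e2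

theorem rat_floor : Computable (fun p : ℚ × ℕ => (p.1.num.toNat * 2 ^ p.2) / p.1.den) := by
  have hu : Computable (fun p : ℚ × ℕ => (e1 p.1).unpair) := Computable.unpair.comp (e1_comp.comp Computable.fst)
  have hn : Primrec (fun a : ℕ => if a % 2 = 0 then a / 2 else 0) :=
    Primrec.ite (Primrec.eq.comp (Primrec.nat_mod.comp Primrec.id (Primrec.const 2)) (Primrec.const 0))
      (Primrec.nat_div.comp Primrec.id (Primrec.const 2)) (Primrec.const 0)
  have hpow : Primrec₂ (fun a b : ℕ => a ^ b) := Primrec₂.unpaired'.1 Nat.Primrec.pow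
  have := Primrec.nat_div.to_comp.comp (Primrec.nat_mul.to_comp.comp (hn.to_comp.comp (Computable.fst.comp hu)) (hpow.to_comp.comp (Computable.const 2) Computable.snd)) (Computable.snd.comp hu)
  refine this.of_eq fun p => ?_
  simp only [e1_eq, Nat.unpair_pair]
  congr 2
  rcases p.1.num with a | a
  · have := int_nonneg a
    simp only [Int.ofNat_eq_natCast, this]; simp
  · rw [int_neg, if_neg (by omega)]; rfl

open Nat.Partrec (Code)

theorem pow_prim : Primrec₂ (fun a b : ℕ => a ^ b) := Primrec₂.unpaired'.1 Nat.Primrec.pow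

def zs (n : ℕ) : List Bool := seqTake (fun _ => false) n

theorem zs_eq (n : ℕ) : zs n = List.replicate n false := by
  simp [zs, seqTake]

theorem zs_prim : Primrec zs := by
  unfold zs seqTake
  exact Primrec.list_map Primrec.list_range (Primrec₂.const false)

def pos (n : ℕ) : ℕ := 3 * 2 ^ n - 1

theorem pos_prim : Primrec pos :=
  Primrec.nat_sub.comp (Primrec.nat_mul.comp (Primrec.const 3) (pow_prim.comp (Primrec.const 2) Primrec.id)) (Primrec.const 1)

theorem pos_mono : StrictMono pos := by
  intro a b h
  have h1 : 2 ^ a < 2 ^ b := Nat.pow_lt_pow_right (by norm_num) h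
  have h2 : 0 < 2 ^ a := by positivity
  unfold pos
  omega

theorem bits_pos (n : ℕ) : Nat.bits (3 * 2 ^ n) = List.replicate n false ++ [true, true] := by
  induction n with
  | zero => 
    have h1 : Nat.bits (2 * 1 + 1) = true :: Nat.bits 1 := Nat.bit1_bits 1
    simpa using h1
  | succ n ih =>
    have h : 3 * 2 ^ (n + 1) = 2 * (3 * 2 ^ n) := by ring
    rw [h, Nat.bit0_bits _ (by positivity), ih]
    rfl

theorem natToStr_pos (n : ℕ) : natToStr (pos n) = zs n ++ [true] := by
  have h : pos n + 1 = 3 * 2 ^ n := by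
    have : 0 < 2 ^ n := by positivity
    unfold pos; omega
  unfold natToStr
  rw [h, bits_pos, zs_eq]
  rw [show List.replicate n false ++ [true, true] = (List.replicate n false ++ [true]) ++ [true] by simp]
  exact List.dropLast_concat

/-- the c.e. set coded into the tree -/
def AA : Set ℕ := {n | ∃ v ∈ (Denumerable.ofNat Code n.unpair.1.unpair.1).eval n.unpair.1, n.unpair.2 < v}

def gA (x : ℕ × ℕ) : Bool :=
  ((Code.evaln x.2 (Denumerable.ofNat Code x.1.unpair.1.unpair.1) x.1.unpair.1).map
    (fun v => decide (x.1.unpair.2 < v))).getD false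

theorem gA_prim : Primrec gA := by
  have hu : Primrec (fun x : ℕ × ℕ => x.1.unpair) := Primrec.unpair.comp Primrec.fst
  have hp : Primrec (fun x : ℕ × ℕ => x.1.unpair.1) := Primrec.fst.comp hu
  have hc : Primrec (fun x : ℕ × ℕ => Denumerable.ofNat Code x.1.unpair.1.unpair.1) :=
    (Primrec.ofNat Code).comp (Primrec.fst.comp (Primrec.unpair.comp hp))
  have he : Primrec (fun x : ℕ × ℕ => Code.evaln x.2 (Denumerable.ofNat Code x.1.unpair.1.unpair.1) x.1.unpair.1) :=
    Code.primrec_evaln.comp (Primrec.pair (Primrec.pair Primrec.snd hc) hp)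
  refine Primrec.option_getD.comp (Primrec.option_map he ?_) (Primrec.const false)
  exact PrimrecRel.decide (Primrec.nat_lt.comp₂ ((Primrec.snd.comp hu).comp₂ Primrec₂.left) Primrec₂.right)

theorem gA_spec (n : ℕ) : n ∈ AA ↔ ∃ s, gA (n, s) = true := by
  unfold AA gA
  constructor
  · rintro ⟨v, hv, hj⟩
    obtain ⟨k, hk⟩ := Code.evaln_complete.1 hv
    refine ⟨k, ?_⟩
    rw [Option.mem_def] at hk
    simp [hk, hj]
  · rintro ⟨s, hs⟩
    dsimp only at hs
    cases h : Code.evaln s (Denumerable.ofNat Code n.unpair.1.unpair.1) n.unpair.1 with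
    | none => simp [h] at hs
    | some v =>
      simp [h] at hs
      exact ⟨v, Code.evaln_complete.2 ⟨s, h⟩, hs⟩

/-- the tree -/
def TT : Set (List Bool) :=
  {σ | σ = zs σ.length ∨ (σ = zs (σ.length - 1) ++ [true] ∧ σ.length - 1 ∉ AA)}

theorem zs_mem (n : ℕ) : zs n ∈ TT := by
  have hl : (zs n).length = n := by simp [zs_eq]
  left
  rw [hl]

theorem zs1_mem (n : ℕ) : zs n ++ [true] ∈ TT ↔ n ∉ AA := by
  constructor
  · rintro (h | h)
    · have : true ∈ zs (zs n ++ [true]).length := by rw [← h]; simp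
      rw [zs_eq] at this
      simp at this
    · simpa [zs_eq] using h.2
  · intro h
    right
    have hl : (zs n ++ [true]).length - 1 = n := by simp [zs_eq]
    rw [hl]
    exact ⟨rfl, h⟩

theorem TT_tree : IsTree TT := by
  have pz : ∀ n τ, τ <+: zs n → τ ∈ TT := by
    intro n τ h
    rw [zs_eq] at h
    left
    rw [zs_eq]
    exact List.eq_replicate_of_mem fun b hb => List.eq_of_mem_replicate (h.subset hb)
  intro σ τ hσ hτ
  rcases hσ with h | h
  · rw [h] at hτ; exact pz _ _ hτ
  · have h1 := hτ
    rw [h.1] at h1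
    rcases List.prefix_concat_iff.1 h1 with h2 | h2
    · have : τ = σ := by rw [h2]; exact h.1.symm
      rw [this]; exact Or.inr h
    · exact pz _ _ h2

theorem TT_coce : CoCE TT := by
  have hlen : Primrec (fun x : List Bool × ℕ => x.1.length) := Primrec.list_length.comp Primrec.fst
  have hlen1 : Primrec (fun x : List Bool × ℕ => x.1.length - 1) := Primrec.nat_sub.comp hlen (Primrec.const 1)
  have h1 : Primrec (fun x : List Bool × ℕ => decide (x.1 = zs x.1.length)) :=
    PrimrecPred.decide (Primrec.eq.comp Primrec.fst (zs_prim.comp hlen))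
  have h2 : Primrec (fun x : List Bool × ℕ => decide (x.1 = zs (x.1.length - 1) ++ [true])) :=
    PrimrecPred.decide (Primrec.eq.comp Primrec.fst (Primrec.list_append.comp (zs_prim.comp hlen1) (Primrec.const [true])))
  have h3 : Primrec (fun x : List Bool × ℕ => gA (x.1.length - 1, x.2)) := gA_prim.comp (Primrec.pair hlen1 Primrec.snd)
  refine ⟨fun x => !(decide (x.1 = zs x.1.length)) && (!(decide (x.1 = zs (x.1.length - 1) ++ [true])) || gA (x.1.length - 1, x.2)), ?_, ?_⟩
  · exact (Primrec.and.comp (Primrec.not.comp h1) (Primrec.or.comp (Primrec.not.comp h2) h3)).to_comp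
  · intro σ
    have hg := gA_spec (σ.length - 1)
    simp only [TT, Set.mem_compl_iff, Set.mem_ofPred_eq, not_or, not_and, not_not, hg]
    simp only [Bool.and_eq_true, Bool.or_eq_true, Bool.not_eq_true', decide_eq_false_iff_not]
    constructor
    · rintro ⟨a, b⟩
      by_cases hc : σ = zs (σ.length - 1) ++ [true]
      · obtain ⟨s, hs⟩ := b hc
        exact ⟨s, a, Or.inr hs⟩
      · exact ⟨0, a, Or.inl hc⟩
    · rintro ⟨s, a, b⟩
      refine ⟨a, fun hc => ⟨s, ?_⟩⟩
      rcases b with b | b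
      · exact absurd hc b
      · exact b

theorem TT_not_tt : ¬ TTDeepClass (paths TT) := by
  intro h
  have hz : (fun _ => false) ∈ paths TT := fun n => zs_mem n
  have hd : ∀ σ : List Bool, (Measure.dirac (fun _ : ℕ => false)) (cyl σ) = if σ = zs σ.length then 1 else 0 := by
    intro σ
    classical
    rw [Measure.dirac_apply, Set.indicator_apply]
    have : (fun _ : ℕ => false) ∈ cyl σ ↔ σ = zs σ.length := Iff.rfl
    simp only [this, Pi.one_apply]
  obtain ⟨g, ⟨-, -, hg⟩, hs⟩ := h (Measure.dirac (fun _ => false)) ⟨inferInstance, by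
    refine ⟨fun x => if x.1 = zs x.1.length then 1 else 0, ?_, ?_⟩
    · exact (Primrec.ite (Primrec.eq.comp Primrec.fst (zs_prim.comp (Primrec.list_length.comp Primrec.fst)))
        (Primrec.const 1) (Primrec.const 0)).to_comp
    · intro σ k
      rw [hd]
      by_cases hc : σ = zs σ.length
      · simp only [if_pos hc]; simp
      · simp only [if_neg hc]; simp⟩
  obtain ⟨n, hn⟩ := hg 1
  have h1 := hs n
  have hl : (zs n).length = n := by simp [zs_eq]
  have h2 : (1 : ℝ≥0∞) ≤ ∑' σ : {σ : List Bool // σ ∈ canonTree (paths TT) ∧ σ.length = n}, Measure.dirac (fun _ : ℕ => false) (cyl σ.1) := by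
    have hm : zs n ∈ canonTree (paths TT) := ⟨_, hz, by rw [hl]; rfl⟩
    refine le_trans ?_ (ENNReal.le_tsum (⟨zs n, hm, hl⟩ : {σ : List Bool // σ ∈ canonTree (paths TT) ∧ σ.length = n}))
    rw [hd, if_pos (by simp only [hl])]
  have h3 := h2.trans h1
  rw [ENNReal.zpow_neg, zpow_natCast, ENNReal.one_le_inv] at h3
  have h4 : (2 : ℝ≥0∞) ^ 1 ≤ 2 ^ g n := pow_le_pow_right₀ (by norm_num) hn
  have h5 := h4.trans h3
  norm_num at h5

def str (m L : ℕ) : List Bool := seqTake m.testBit L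

theorem testBit_prim : Primrec₂ Nat.testBit := by
  have h : Primrec (fun x : ℕ × ℕ => decide (x.1 / 2 ^ x.2 % 2 = 1)) :=
    PrimrecPred.decide (Primrec.eq.comp (Primrec.nat_mod.comp (Primrec.nat_div.comp Primrec.fst
      (pow_prim.comp (Primrec.const 2) Primrec.snd)) (Primrec.const 2)) (Primrec.const 1))
  exact h.of_eq fun x => (Nat.testBit_eq_decide_div_mod_eq).symm

theorem str_prim : Primrec₂ str := by
  unfold str seqTake
  exact Primrec.list_map (Primrec.list_range.comp Primrec.snd)
    (testBit_prim.comp₂ ((Primrec.fst.comp Primrec.fst).to₂) Primrec₂.right)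

/-- the bits of `m` on block `p` are `v` times false followed by true -/
def cnd (p v m : ℕ) : Prop := ∀ j < 2 ^ (p + 1), m.testBit (pos (Nat.pair p j)) = !decide (j < v)

instance (p v m : ℕ) : Decidable (cnd p v m) := by unfold cnd; infer_instance

theorem cnd_prim : PrimrecPred (fun x : ℕ × ℕ × ℕ => cnd x.1 x.2.1 x.2.2) := by
  have hR : PrimrecRel (fun (j : ℕ) (x : ℕ × ℕ × ℕ) => x.2.2.testBit (pos (Nat.pair x.1 j)) = !decide (j < x.2.1)) := by
    have hx : Primrec (fun y : ℕ × ℕ × ℕ × ℕ => y.2) := Primrec.snd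
    have hm : Primrec (fun y : ℕ × ℕ × ℕ × ℕ => y.2.2.2) := Primrec.snd.comp (Primrec.snd.comp hx)
    have hv : Primrec (fun y : ℕ × ℕ × ℕ × ℕ => y.2.2.1) := Primrec.fst.comp (Primrec.snd.comp hx)
    exact Primrec.eq.comp (testBit_prim.comp hm (pos_prim.comp (Primrec₂.natPair.comp (Primrec.fst.comp hx) Primrec.fst)))
      (Primrec.not.comp (PrimrecPred.decide (Primrec.nat_lt.comp Primrec.fst hv)))
  have h3 : PrimrecPred (fun x : ℕ × ℕ × ℕ => ∀ j ∈ List.range (2 ^ (x.1 + 1)),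
      x.2.2.testBit (pos (Nat.pair x.1 j)) = !decide (j < x.2.1)) :=
    hR.forall_mem_list.comp (Primrec.list_range.comp
      (pow_prim.comp (Primrec.const 2) (Primrec.succ.comp Primrec.fst))) Primrec.id
  exact h3.of_eq (fun x => by simp [cnd])

theorem cnd_dec_comp : Computable (fun x : ℕ × ℕ × ℕ => decide (cnd x.1 x.2.1 x.2.2)) :=
  (PrimrecPred.decide cnd_prim).to_comp

theorem cnd_unique {p v w m : ℕ} (hv : v ≤ 2 ^ (p + 1)) (hw : w ≤ 2 ^ (p + 1))
    (h1 : cnd p v m) (h2 : cnd p w m) : v = w := by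
  by_contra hne
  rcases lt_or_gt_of_ne hne with h | h
  · have a := h1 v (by omega)
    have b := h2 v (by omega)
    rw [a] at b
    simp [h] at b
  · have a := h1 w (by omega)
    have b := h2 w (by omega)
    rw [a] at b
    simp [h] at b

def LL (p : ℕ) : ℕ := pos (Nat.pair p (2 ^ (p + 1))) + 1

theorem LL_prim : Primrec LL :=
  Primrec.succ.comp (pos_prim.comp (Primrec₂.natPair.comp Primrec.id (pow_prim.comp (Primrec.const 2) Primrec.succ)))

theorem pos_lt_LL {p j : ℕ} (h : j < 2 ^ (p + 1)) : pos (Nat.pair p j) < LL p :=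
  (pos_mono (Nat.pair_lt_pair_right p h)).trans (Nat.lt_succ_self _)

theorem str_congr {m : ℕ} {X : ℕ → Bool} {L : ℕ} : X ∈ cyl (str m L) ↔ ∀ j < L, m.testBit j = X j := by
  have hl : (str m L).length = L := by simp [str, seqTake]
  show str m L = seqTake X (str m L).length ↔ _
  rw [hl]
  unfold str seqTake
  simp

theorem cyl_meas (m L : ℕ) : MeasurableSet (cyl (str m L)) := by
  have : cyl (str m L) = ⋂ j ∈ Finset.range L, (fun X : ℕ → Bool => X j) ⁻¹' {m.testBit j} := by
    ext X
    rw [str_congr]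
    simp [eq_comm]
  rw [this]
  exact Finset.measurableSet_biInter _ fun j _ => measurable_pi_apply j (measurableSet_singleton _)

theorem sum_cyl_le (μ : Measure (ℕ → Bool)) [IsProbabilityMeasure μ] (L : ℕ) :
    ∑ m ∈ Finset.range (2 ^ L), (μ (cyl (str m L))).toReal ≤ 1 := by
  have hdis : Set.PairwiseDisjoint (↑(Finset.range (2 ^ L))) (fun m => cyl (str m L)) := by
    intro m hm n hn hne
    rw [Function.onFun, Set.disjoint_left]
    intro X h1 h2
    rw [str_congr] at h1 h2
    apply hne
    apply Nat.eq_of_testBit_eq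
    intro j
    by_cases hj : j < L
    · rw [h1 j hj, h2 j hj]
    · have hp : 2 ^ L ≤ 2 ^ j := Nat.pow_le_pow_right (by norm_num) (by omega)
      rw [Nat.testBit_lt_two_pow ((Finset.mem_range.1 hm).trans_le hp),
        Nat.testBit_lt_two_pow ((Finset.mem_range.1 hn).trans_le hp)]
  have h := measure_biUnion_finset hdis (fun m _ => cyl_meas m L) (μ := μ)
  rw [← ENNReal.toReal_sum (fun m _ => measure_ne_top _ _), ← h]
  exact ENNReal.toReal_le_of_le_ofReal zero_le_one (by simpa using prob_le_one)

noncomputable def MM (μ : Measure (ℕ → Bool)) (p v : ℕ) : ℝ :=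
  ∑ m ∈ Finset.range (2 ^ LL p), if cnd p v m then (μ (cyl (str m (LL p)))).toReal else 0

theorem exists_small (μ : Measure (ℕ → Bool)) [IsProbabilityMeasure μ] (p : ℕ) :
    ∃ v, MM μ p v * 2 ^ (p + 1) ≤ 1 := by
  by_contra! hcon
  have h1 : ∑ v ∈ Finset.range (2 ^ (p + 1)), MM μ p v ≤ 1 := by
    unfold MM
    rw [Finset.sum_comm]
    refine le_trans (Finset.sum_le_sum fun m _ => ?_) (sum_cyl_le μ (LL p))
    by_cases hex : ∃ v ∈ Finset.range (2 ^ (p + 1)), cnd p v m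
    · obtain ⟨v, hv, hc⟩ := hex
      rw [Finset.sum_eq_single v]
      · simp [hc]
      · intro w hw hne
        rw [if_neg]
        intro hcw
        exact hne (cnd_unique (Finset.mem_range.1 hw).le (Finset.mem_range.1 hv).le hcw hc)
      · intro hv'; exact absurd hv hv'
    · rw [Finset.sum_eq_zero]
      · exact ENNReal.toReal_nonneg
      · intro w hw
        rw [if_neg]
        intro hcw
        exact hex ⟨w, hw, hcw⟩
  have h2 : ∑ v ∈ Finset.range (2 ^ (p + 1)), (1 : ℝ) < ∑ v ∈ Finset.range (2 ^ (p + 1)), MM μ p v * 2 ^ (p + 1) :=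
    Finset.sum_lt_sum_of_nonempty (by simp) fun v _ => hcon v
  rw [← Finset.sum_mul] at h2
  simp only [Finset.sum_const, Finset.card_range, nsmul_eq_mul, mul_one, Nat.cast_pow, Nat.cast_ofNat] at h2
  have h3 : (0:ℝ) < 2 ^ (p + 1) := by positivity
  nlinarith

theorem floor_spec (x : ℚ) (r : ℝ) (k : ℕ) (hr : 0 ≤ r) (h : |(x : ℝ) - r| ≤ (2 : ℝ) ^ (-(k : ℤ))) :
    |(((x.num.toNat * 2 ^ k) / x.den : ℕ) : ℝ) - r * 2 ^ k| ≤ 2 := by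
  have h2 : (0:ℝ) < 2 ^ k := by positivity
  have h' : |(x : ℝ) * 2 ^ k - r * 2 ^ k| ≤ 1 := by
    rw [← sub_mul, abs_mul, abs_of_pos h2]
    calc _ ≤ (2 : ℝ) ^ (-(k : ℤ)) * 2 ^ k := by gcongr
      _ = 1 := by rw [zpow_neg, zpow_natCast]; field_simp
  rw [abs_le] at h' ⊢
  by_cases hx : 0 ≤ x
  · have hnum : (0:ℤ) ≤ x.num := Rat.num_nonneg.2 hx
    have hd : (0:ℝ) < x.den := by exact_mod_cast x.den_pos
    have hxe : (x:ℝ) * 2 ^ k = ((x.num.toNat * 2 ^ k : ℕ) : ℝ) / (x.den : ℝ) := by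
      have e1 : ((x.num.toNat : ℕ) : ℝ) = (x.num : ℝ) := by
        have : ((x.num.toNat : ℕ) : ℤ) = x.num := Int.toNat_of_nonneg hnum
        exact_mod_cast this
      push_cast
      rw [e1, Rat.cast_def]
      ring
    have a1 : (((x.num.toNat * 2 ^ k) / x.den : ℕ) : ℝ) ≤ (x:ℝ) * 2 ^ k := by
      rw [hxe]; exact Nat.cast_div_le
    have a2 : (x:ℝ) * 2 ^ k ≤ (((x.num.toNat * 2 ^ k) / x.den : ℕ) : ℝ) + 1 := by
      rw [hxe, div_le_iff₀ hd]
      have := (Nat.div_lt_iff_lt_mul x.den_pos).1 (Nat.lt_succ_self (x.num.toNat * 2 ^ k / x.den))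
      exact_mod_cast this.le
    constructor <;> linarith
  · push Not at hx
    have hnum : x.num.toNat = 0 := Int.toNat_of_nonpos (Rat.num_neg.2 hx).le
    rw [hnum]
    have hx' : (x:ℝ) < 0 := by exact_mod_cast hx
    have : 0 ≤ r * 2 ^ k := by positivity
    have : (x:ℝ) * 2 ^ k ≤ 0 := by nlinarith
    simp only [zero_mul, Nat.zero_div, Nat.cast_zero]
    constructor <;> linarith

theorem exists_f (μ : Measure (ℕ → Bool)) (hμ : ComputableMeasure μ) :
    ∃ f : ℕ → ℕ, Computable f ∧ ∀ p, MM μ p (f p) * 2 ^ p ≤ 1 := by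
  obtain ⟨hprob, q, hq, hqs⟩ := hμ
  let a : List Bool × ℕ → ℕ := fun x => ((q x).num.toNat * 2 ^ x.2) / (q x).den
  have ha : Computable a := rat_floor.comp (Computable.pair hq Computable.snd)
  let kk : ℕ → ℕ := fun p => LL p + p + 3
  have hkk : Primrec kk := Primrec.nat_add.comp (Primrec.nat_add.comp LL_prim Primrec.id) (Primrec.const 3)
  let S : ℕ × ℕ → ℕ := fun x => ∑ m ∈ Finset.range (2 ^ LL x.1), if cnd x.1 x.2 m then a (str m (LL x.1), kk x.1) else 0
  have hS : Computable S := by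
    have hL : Primrec (fun x : ℕ × ℕ => LL x.1) := LL_prim.comp Primrec.fst
    have h1 : Computable (fun y : (ℕ × ℕ) × (ℕ × ℕ) =>
        y.2.2 + bif (decide (cnd y.1.1 y.1.2 y.2.1)) then a (str y.2.1 (LL y.1.1), kk y.1.1) else 0) := by
      have hm : Primrec (fun y : (ℕ × ℕ) × (ℕ × ℕ) => y.2.1) := Primrec.fst.comp Primrec.snd
      have hp : Primrec (fun y : (ℕ × ℕ) × (ℕ × ℕ) => y.1.1) := Primrec.fst.comp Primrec.fst
      have hv : Primrec (fun y : (ℕ × ℕ) × (ℕ × ℕ) => y.1.2) := Primrec.snd.comp Primrec.fst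
      refine Primrec.nat_add.to_comp.comp (Computable.snd.comp Computable.snd) (Computable.cond ?_ ?_ (Computable.const 0))
      · exact (PrimrecPred.decide (cnd_prim.comp (Primrec.pair hp (Primrec.pair hv hm)))).to_comp
      · exact ha.comp (Primrec.pair (str_prim.comp hm (LL_prim.comp hp)) (hkk.comp hp)).to_comp
    refine (Computable.nat_rec (f := fun x : ℕ × ℕ => 2 ^ LL x.1) (g := fun _ => 0)
      (h := fun x y => y.2 + bif (decide (cnd x.1 x.2 y.1)) then a (str y.1 (LL x.1), kk x.1) else 0)
      (pow_prim.comp (Primrec.const 2) hL).to_comp (Computable.const 0) h1).of_eq fun x => ?_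
    show _ = ∑ m ∈ Finset.range (2 ^ LL x.1), if cnd x.1 x.2 m then a (str m (LL x.1), kk x.1) else 0
    generalize 2 ^ LL x.1 = N
    induction N with
    | zero => rfl
    | succ N ih =>
      rw [Finset.sum_range_succ, ← ih]
      by_cases hc : cnd x.1 x.2 N <;> simp [hc]
  have herr : ∀ p v, |(S (p, v) : ℝ) - MM μ p v * 2 ^ kk p| ≤ 2 * 2 ^ LL p := by
    intro p v
    simp only [S, MM]
    rw [Nat.cast_sum, Finset.sum_mul, ← Finset.sum_sub_distrib]
    refine (Finset.abs_sum_le_sum_abs _ _).trans ?_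
    calc _ ≤ ∑ m ∈ Finset.range (2 ^ LL p), (2:ℝ) := by
          refine Finset.sum_le_sum fun m _ => ?_
          by_cases hc : cnd p v m
          · simp only [hc, if_true]
            exact floor_spec _ _ _ ENNReal.toReal_nonneg (hqs _ _)
          · simp [hc]
      _ = 2 * 2 ^ LL p := by simp [mul_comm]
  have hK : ∀ p, (2:ℝ) ^ kk p = 2 * 2 ^ LL p * 2 ^ (p + 2) := by
    intro p; simp only [kk]; ring
  have hcrit : ∀ p, ∃ v, S (p, v) * 2 ^ (p + 2) ≤ 3 * 2 ^ kk p := by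
    intro p
    obtain ⟨v, hv⟩ := exists_small μ p
    refine ⟨v, ?_⟩
    have h1 := (abs_le.1 (herr p v)).2
    have h2 : (0:ℝ) < 2 ^ (p + 2) := by positivity
    have h3 : (0:ℝ) < 2 ^ kk p := by positivity
    have h4 : ((S (p, v) : ℝ)) * 2 ^ (p + 2) ≤ 3 * 2 ^ kk p := by
      calc (S (p, v) : ℝ) * 2 ^ (p + 2) ≤ (MM μ p v * 2 ^ kk p + 2 * 2 ^ LL p) * 2 ^ (p + 2) := by
            gcongr; linarith
        _ = 2 * 2 ^ kk p * (MM μ p v * 2 ^ (p + 1)) + 2 ^ kk p := by rw [add_mul, ← hK]; ring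
        _ ≤ 2 * 2 ^ kk p * 1 + 2 ^ kk p := by gcongr
        _ = 3 * 2 ^ kk p := by ring
    exact_mod_cast h4
  refine ⟨fun p => Nat.find (hcrit p), ?_, ?_⟩
  · have hd : Computable₂ (fun p v : ℕ => decide (S (p, v) * 2 ^ (p + 2) ≤ 3 * 2 ^ kk p)) := by
      have hle : Primrec₂ (fun a b : ℕ => decide (a ≤ b)) := PrimrecRel.decide Primrec.nat_le
      have hp2 : Primrec (fun x : ℕ × ℕ => 2 ^ (x.1 + 2)) :=
        pow_prim.comp (Primrec.const 2) (Primrec.nat_add.comp Primrec.fst (Primrec.const 2))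
      have hk2 : Primrec (fun x : ℕ × ℕ => 3 * 2 ^ kk x.1) :=
        Primrec.nat_mul.comp (Primrec.const 3) (pow_prim.comp (Primrec.const 2) (hkk.comp Primrec.fst))
      exact hle.to_comp.comp (Primrec.nat_mul.to_comp.comp hS hp2.to_comp) hk2.to_comp
    have h1 : Partrec (fun p : ℕ => Nat.rfind (fun v => Part.some (decide (S (p, v) * 2 ^ (p + 2) ≤ 3 * 2 ^ kk p)))) :=
      Partrec.rfind hd.partrec₂
    refine h1.of_eq_tot fun p => ?_
    refine Nat.mem_rfind.2 ⟨?_, ?_⟩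
    · simpa using Nat.find_spec (hcrit p)
    · intro v hv
      have := Nat.find_min (hcrit p) hv
      simpa using this
  · intro p
    have hs := Nat.find_spec (hcrit p)
    show MM μ p (Nat.find (hcrit p)) * 2 ^ p ≤ 1
    generalize Nat.find (hcrit p) = v at hs
    have h1 := (abs_le.1 (herr p v)).1
    have h3 : (0:ℝ) < 2 ^ kk p := by positivity
    have h4 : ((S (p, v) : ℝ)) * 2 ^ (p + 2) ≤ 3 * 2 ^ kk p := by exact_mod_cast hs
    have h5 : 2 ^ kk p * (4 * (MM μ p v * 2 ^ p)) ≤ 2 ^ kk p * 4 := by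
      calc 2 ^ kk p * (4 * (MM μ p v * 2 ^ p)) = (MM μ p v * 2 ^ kk p) * 2 ^ (p + 2) := by ring
        _ ≤ (S (p, v) + 2 * 2 ^ LL p) * 2 ^ (p + 2) := by gcongr; linarith
        _ = S (p, v) * 2 ^ (p + 2) + 2 ^ kk p := by rw [add_mul, ← hK]
        _ ≤ 3 * 2 ^ kk p + 2 ^ kk p := by gcongr
        _ = 2 ^ kk p * 4 := by ring
    have := le_of_mul_le_mul_left h5 h3
    linarith

theorem TT_weakly : WeaklyDeep (charSeqStr TT) := by
  intro μ hμ hR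
  obtain ⟨f, hf, hfs⟩ := exists_f μ hμ
  have hprob := hμ.1
  obtain ⟨c, hc⟩ := Code.exists_code.1 (Partrec.nat_iff.1 hf.partrec)
  obtain ⟨pp, hppd⟩ : ∃ pp : ℕ → ℕ, pp = fun i => Nat.pair (encode c) i := ⟨_, rfl⟩
  have hpp : Primrec pp := by
    rw [hppd]
    exact Primrec₂.natPair.comp (Primrec.const _) Primrec.id
  let W : ℕ → Set (List Bool) := fun i => {σ | ∃ m, m < 2 ^ LL (pp i) ∧ cnd (pp i) (f (pp i)) m ∧ σ = str m (LL (pp i))}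
  refine hR W ?_ ?_ ?_
  · refine ⟨fun x => decide (x.2 < 2 ^ LL (pp x.1.1)) && (decide (cnd (pp x.1.1) (f (pp x.1.1)) x.2) && decide (x.1.2 = str x.2 (LL (pp x.1.1)))), ?_, ?_⟩
    · have hp : Primrec (fun x : (ℕ × List Bool) × ℕ => pp x.1.1) := hpp.comp (Primrec.fst.comp Primrec.fst)
      have h1 : Primrec (fun x : (ℕ × List Bool) × ℕ => decide (x.2 < 2 ^ LL (pp x.1.1))) :=
        PrimrecPred.decide (Primrec.nat_lt.comp Primrec.snd (pow_prim.comp (Primrec.const 2) (LL_prim.comp hp)))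
      have h3 : Primrec (fun x : (ℕ × List Bool) × ℕ => decide (x.1.2 = str x.2 (LL (pp x.1.1)))) :=
        PrimrecPred.decide (Primrec.eq.comp (Primrec.snd.comp Primrec.fst) (str_prim.comp Primrec.snd (LL_prim.comp hp)))
      have h2 : Computable (fun x : (ℕ × List Bool) × ℕ => decide (cnd (pp x.1.1) (f (pp x.1.1)) x.2)) :=
        by
          have hcomb : Computable (fun x : (ℕ × List Bool) × ℕ => ((pp x.1.1, f (pp x.1.1), x.2) : ℕ × ℕ × ℕ)) :=
            Computable.pair hp.to_comp (Computable.pair (hf.comp hp.to_comp) Computable.snd)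
          exact Computable.comp (f := fun y : ℕ × ℕ × ℕ => decide (cnd y.1 y.2.1 y.2.2)) cnd_dec_comp hcomb
      exact Primrec.and.to_comp.comp h1.to_comp (Primrec.and.to_comp.comp h2 h3.to_comp)
    · rintro ⟨i, σ⟩
      simp [W]
  · intro i
    have hip : i ≤ pp i := by
      rw [hppd]
      exact Nat.right_le_pair _ _
    have hsub : (⋃ σ ∈ W i, cyl σ) ⊆ ⋃ m ∈ (Finset.range (2 ^ LL (pp i))).filter (fun m => cnd (pp i) (f (pp i)) m), cyl (str m (LL (pp i))) := by
      intro X hX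
      simp only [Set.mem_iUnion] at hX ⊢
      obtain ⟨σ, ⟨m, hm, hcm, rfl⟩, hX⟩ := hX
      exact ⟨m, Finset.mem_filter.2 ⟨Finset.mem_range.2 hm, hcm⟩, hX⟩
    refine (measure_mono hsub).trans ((measure_biUnion_finset_le _ _).trans ?_)
    have h1 := hfs (pp i)
    have h2 : MM μ (pp i) (f (pp i)) = (∑ m ∈ (Finset.range (2 ^ LL (pp i))).filter (fun m => cnd (pp i) (f (pp i)) m), μ (cyl (str m (LL (pp i))))).toReal := by
      rw [ENNReal.toReal_sum (fun m _ => measure_ne_top _ _), Finset.sum_filter]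
      rfl
    have hne : (∑ m ∈ (Finset.range (2 ^ LL (pp i))).filter (fun m => cnd (pp i) (f (pp i)) m), μ (cyl (str m (LL (pp i))))) ≠ ⊤ :=
      ENNReal.sum_ne_top.2 fun m _ => measure_ne_top _ _
    rw [← ENNReal.ofReal_toReal hne, ← h2]
    have h3 : MM μ (pp i) (f (pp i)) ≤ ((2:ℝ) ^ i)⁻¹ := by
      have h4 : (2:ℝ) ^ i ≤ 2 ^ pp i := pow_le_pow_right₀ (by norm_num) hip
      have h5 : 0 ≤ MM μ (pp i) (f (pp i)) := by rw [h2]; exact ENNReal.toReal_nonneg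
      rw [← one_div, le_div_iff₀ (by positivity)]
      nlinarith
    refine (ENNReal.ofReal_le_ofReal h3).trans (le_of_eq ?_)
    rw [ENNReal.zpow_neg, zpow_natCast, ENNReal.ofReal_inv_of_pos (by positivity), ENNReal.ofReal_pow (by norm_num)]
    norm_num
  · simp only [Set.mem_iInter, Set.mem_iUnion]
    intro i
    let X := charSeqStr TT
    let m := Nat.ofBits (fun j : Fin (LL (pp i)) => X j)
    have hm : ∀ j, j < LL (pp i) → m.testBit j = X j := fun j hj => Nat.testBit_ofBits_lt _ j hj
    refine ⟨str m (LL (pp i)), ⟨m, Nat.ofBits_lt_two_pow _, ?_, rfl⟩, str_congr.2 hm⟩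
    intro j hj
    rw [hm _ (pos_lt_LL hj)]
    classical
    have hXe : X (pos (Nat.pair (pp i) j)) = decide (natToStr (pos (Nat.pair (pp i) j)) ∈ TT) := by
      simp only [X, charSeqStr]
    rw [hXe]
    have hA : Nat.pair (pp i) j ∈ AA ↔ j < f (pp i) := by
      unfold AA
      simp only [Set.mem_ofPred_eq, Nat.unpair_pair, hppd, Denumerable.ofNat_encode, hc]
      simp
    rw [natToStr_pos]
    by_cases hjf : j < f (pp i)
    · have : ¬ (zs (Nat.pair (pp i) j) ++ [true] ∈ TT) := fun h => (zs1_mem _).1 h (hA.2 hjf)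
      simp [this, hjf]
    · have : zs (Nat.pair (pp i) j) ++ [true] ∈ TT := (zs1_mem _).2 fun h => hjf (hA.1 h)
      simp [this, hjf]

/-- There is a co-c.e. tree `T` whose characteristic sequence is weakly deep,
but such that the Π⁰₁ class `[T]` is not tt-deep. -/
theorem statement6 :
    ∃ T : Set (List Bool), IsTree T ∧ CoCE T ∧
      WeaklyDeep (charSeqStr T) ∧ ¬ TTDeepClass (paths T) :=
  ⟨TT, TT_tree, TT_coce, TT_weakly, TT_not_tt⟩

end Depth
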